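/- Let a, b, c be complex numbers such that (a+b−2)/2 is not a nonpositive integer, 2c is not a nonpositive integer, and Re(2c − a − b) > 3. Then ₃F₂(a, b, c; (a+b−2)/2, 2c+1; 1) = ₃F₂(a, b, c; (a+b−2)/2, 2c; 1) − (ab/((2c+1)(a+b−2))) · ₃F₂(a+1, b+1, c+1; (a+b)/2, 2c+2; 1). -/

import Mathlib

open scoped Nat

/-- The generalized hypergeometric series `₃F₂(a, b, c; d, e; 1)`, defined as
`∑ₙ (a)ₙ(b)ₙ(c)ₙ / ((d)ₙ(e)ₙ n!)` where `(α)ₙ` is the Pochhammer symbol. -/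
noncomputable def hyp3F2 (a b c d e : ℂ) : ℂ :=
  ∑' n : ℕ,
    ((ascPochhammer ℂ n).eval a * (ascPochhammer ℂ n).eval b * (ascPochhammer ℂ n).eval c) /
      ((ascPochhammer ℂ n).eval d * (ascPochhammer ℂ n).eval e * (n ! : ℂ))

lemma poch_prod (n : ℕ) (s : ℂ) :
    (ascPochhammer ℂ n).eval s = ∏ j ∈ Finset.range n, (s + j) := by
  induction n with
  | zero => simp
  | succ n ih => rw [ascPochhammer_succ_eval, ih, Finset.prod_range_succ]

open Filter Asymptotics in
lemma inv_poch_bigO (s : ℂ) :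
    (fun n : ℕ => ((ascPochhammer ℂ (n+1)).eval s)⁻¹) =O[atTop]
      (fun n : ℕ => ((n:ℝ) ^ s.re * (n ! : ℝ))⁻¹) := by
  have h := (Complex.GammaSeq_tendsto_Gamma s).isBigO_one ℝ
  have h2 : (fun n : ℕ => ((n:ℂ) ^ s * (n ! : ℂ))⁻¹) =O[atTop]
      (fun n : ℕ => ((n:ℝ) ^ s.re * (n ! : ℝ))⁻¹) := by
    refine IsBigO.of_bound 1 ?_
    filter_upwards [eventually_gt_atTop 0] with n hn
    rw [norm_inv, norm_mul, Complex.norm_natCast_cpow_of_pos hn, Complex.norm_natCast, one_mul]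
    exact le_abs_self _
  refine ((h.mul h2).congr' ?_ ?_)
  · filter_upwards [eventually_gt_atTop 0] with n hn
    have h3 : (n:ℂ) ^ s ≠ 0 := by
      rw [Ne, Complex.cpow_eq_zero_iff]
      simp; intro h; omega
    have h4 : (n ! : ℂ) ≠ 0 := by exact_mod_cast n.factorial_ne_zero
    rw [Complex.GammaSeq, poch_prod]
    field_simp
  · simp

open Filter Asymptotics in
lemma poch_bigO (s : ℂ) :
    (fun n : ℕ => ((ascPochhammer ℂ (n+1)).eval s)) =O[atTop]
      (fun n : ℕ => ((n:ℝ) ^ s.re * (n ! : ℝ))) := by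
  by_cases hs : ∃ m : ℕ, s = -(m:ℂ)
  · obtain ⟨m, rfl⟩ := hs
    refine IsBigO.of_bound 1 ?_
    filter_upwards [eventually_ge_atTop m] with n hn
    have : (ascPochhammer ℂ (n+1)).eval (-(m:ℂ)) = 0 := by
      rw [poch_prod]
      exact Finset.prod_eq_zero (i := m) (Finset.mem_range.2 (by omega)) (by simp)
    rw [this]; simp; positivity
  push Not at hs
  have h := ((Complex.GammaSeq_tendsto_Gamma s).inv₀ (Complex.Gamma_ne_zero hs)).isBigO_one ℝ
  have h2 : (fun n : ℕ => ((n:ℂ) ^ s * (n ! : ℂ))) =O[atTop]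
      (fun n : ℕ => ((n:ℝ) ^ s.re * (n ! : ℝ))) := by
    refine IsBigO.of_bound 1 ?_
    filter_upwards [eventually_gt_atTop 0] with n hn
    rw [norm_mul, Complex.norm_natCast_cpow_of_pos hn, Complex.norm_natCast, one_mul]
    exact le_abs_self _
  refine ((h.mul h2).congr' ?_ ?_)
  · filter_upwards [eventually_gt_atTop 0] with n hn
    have h3 : (n:ℂ) ^ s ≠ 0 := by
      rw [Ne, Complex.cpow_eq_zero_iff]
      simp; intro h; omega
    have h4 : (n ! : ℂ) ≠ 0 := by exact_mod_cast n.factorial_ne_zero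
    rw [Complex.GammaSeq, poch_prod, inv_div]
    field_simp
  · simp

open Filter Asymptotics in
lemma hyp_summable (a b c d e : ℂ) (h : 0 < (d + e - a - b - c).re) :
    Summable (fun n : ℕ =>
    ((ascPochhammer ℂ n).eval a * (ascPochhammer ℂ n).eval b * (ascPochhammer ℂ n).eval c) /
      ((ascPochhammer ℂ n).eval d * (ascPochhammer ℂ n).eval e * (n ! : ℂ))) := by
  rw [← summable_nat_add_iff 1]
  have h1 := (((poch_bigO a).mul (poch_bigO b)).mul (poch_bigO c)).mul
    (((inv_poch_bigO d).mul (inv_poch_bigO e)).mul (inv_poch_bigO 1))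
  have hs : Summable (fun n : ℕ => (n:ℝ) ^ (-(d + e - a - b - c).re - 1)) :=
    Real.summable_nat_rpow.2 (by linarith)
  refine summable_of_isBigO_nat hs (h1.congr' ?_ ?_)
  · refine Eventually.of_forall fun n => ?_
    have : (ascPochhammer ℂ (n+1)).eval 1 = ((n+1)! : ℂ) := by
      simpa using (ascPochhammer_eval_one ℂ (n+1))
    simp only [this, div_eq_mul_inv, mul_inv]
  · filter_upwards [eventually_gt_atTop 0] with n hn
    have hn' : (0:ℝ) < n := by exact_mod_cast hn
    have h4 : (n ! : ℝ) ≠ 0 := by exact_mod_cast n.factorial_ne_zero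
    have : -(d + e - a - b - c).re - 1 = a.re + b.re + c.re + (-d.re) + (-e.re) + (-(1:ℂ).re) := by
      simp; ring
    rw [this, Real.rpow_add hn', Real.rpow_add hn', Real.rpow_add hn', Real.rpow_add hn',
      Real.rpow_add hn', Real.rpow_neg hn'.le, Real.rpow_neg hn'.le, Real.rpow_neg hn'.le]
    field_simp

lemma poch_succ_left (s : ℂ) (n : ℕ) :
    (ascPochhammer ℂ (n+1)).eval s = s * (ascPochhammer ℂ n).eval (s+1) := by
  simp [ascPochhammer_succ_left, Polynomial.eval_comp]

theorem watson_contiguous_9 (a b c : ℂ)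
    (hd : ∀ m : ℕ, (a + b - 2) / 2 ≠ -(m : ℂ))
    (he : ∀ m : ℕ, 2 * c ≠ -(m : ℂ))
    (hre : (2 * c - a - b).re > 3) :
    hyp3F2 a b c ((a + b - 2) / 2) (2 * c + 1) =
      hyp3F2 a b c ((a + b - 2) / 2) (2 * c) -
        a * b / ((2 * c + 1) * (a + b - 2)) *
          hyp3F2 (a + 1) (b + 1) (c + 1) ((a + b) / 2) (2 * c + 2) := by
  have hd2 : (a + b) / 2 = (a + b - 2) / 2 + 1 := by ring
  have hd3 : a + b - 2 = 2 * ((a + b - 2) / 2) := by ring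
  have hr : ((a + b - 2) / 2).re = (a.re + b.re - 2) / 2 := by
    rw [show (a + b - 2) / 2 = (a+b-2) / ((2:ℝ):ℂ) by norm_num, Complex.div_ofReal_re]; simp
  rw [hd2]
  have hp : a * b / ((2 * c + 1) * (a + b - 2)) = 
      a * b / ((2 * c + 1) * (2 * ((a + b - 2) / 2))) := by rw [← hd3]
  rw [hp]
  generalize (a + b - 2) / 2 = d at *
  simp at hre
  have s1 := hyp_summable a b c d (2*c+1) (by simp [hr]; linarith)
  have s2 := hyp_summable a b c d (2*c) (by simp [hr]; linarith)
  have s3 := hyp_summable (a+1) (b+1) (c+1) (d+1) (2*c+2) (by simp [hr]; linarith)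
  unfold hyp3F2
  rw [s1.tsum_eq_zero_add, s2.tsum_eq_zero_add, ← tsum_mul_left, add_sub_assoc,
    ← Summable.tsum_sub ((summable_nat_add_iff 1).2 s2) (s3.mul_left _)]
  congr 1
  · simp
  refine tsum_congr fun n => ?_
  have hc : ∀ m : ℕ, 2 * c + m ≠ 0 := fun m h => he m (eq_neg_of_add_eq_zero_left h)
  have hdd : ∀ m : ℕ, d + m ≠ 0 := fun m h => hd m (eq_neg_of_add_eq_zero_left h)
  have e1 : (ascPochhammer ℂ (n+1)).eval (2*c+1) =
     (ascPochhammer ℂ n).eval (2*c+1) * (2*c+1+n) := ascPochhammer_succ_eval _ _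
  have e2 : (2*c+1) * (ascPochhammer ℂ n).eval (2*c+2) =
     (ascPochhammer ℂ n).eval (2*c+1) * (2*c+1+n) := by
    rw [← e1, poch_succ_left, add_assoc, one_add_one_eq_two]
  have q0 : (ascPochhammer ℂ n).eval (2*c+1) ≠ 0 := by
    rw [poch_prod, Finset.prod_ne_zero_iff]
    intro i _
    have := hc (i+1); push_cast at this; convert this using 1; ring
  have q1 : (ascPochhammer ℂ n).eval (d+1) ≠ 0 := by
    rw [poch_prod, Finset.prod_ne_zero_iff]
    intro i _
    have := hdd (i+1); push_cast at this; convert this using 1; ring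
  have c0 := hc 0
  have c1 := hc 1
  have cn := hc (n+1)
  have d0 := hdd 0
  push_cast at c0 c1 cn d0
  rw [add_zero] at c0 d0
  have cz : c ≠ 0 := fun h => c0 (by simp [h])
  have cn' : 2*c+1+n ≠ 0 := by convert cn using 1; ring
  have e3 : (ascPochhammer ℂ n).eval (2*c+2) =
     (ascPochhammer ℂ n).eval (2*c+1) * (2*c+1+n) / (2*c+1) := by
    rw [← e2]; field_simp
  rw [e1, e3]
  simp only [poch_succ_left, Nat.factorial_succ, Nat.cast_mul, Nat.cast_add, Nat.cast_one]
  have h4 : (n ! : ℂ) ≠ 0 := by exact_mod_cast n.factorial_ne_zero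
  have h5 : (n + 1 : ℂ) ≠ 0 := by exact_mod_cast n.succ_ne_zero
  clear e1 e2 e3 s1 s2 s3 hp hd2 hd3
  generalize (ascPochhammer ℂ n).eval (2*c+1) = P1 at *
  generalize (ascPochhammer ℂ n).eval (d+1) = P2 at *
  generalize (ascPochhammer ℂ n).eval (a+1) = P3 at *
  generalize (ascPochhammer ℂ n).eval (b+1) = P4 at *
  generalize (ascPochhammer ℂ n).eval (c+1) = P5 at *
  generalize (n ! : ℂ) = F at *
  generalize (n : ℂ) = N at *
  have hN : N + 1 = (2*c+1+N) - 2*c := by ring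
  rw [hN] at h5 ⊢
  generalize 2*c+1+N = u at *
  generalize 2*c+1 = v at *
  field_simp
  have h6 : u - c * 2 ≠ 0 := by rwa [mul_comm c 2]
  field_simp
  ring
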